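/- arXiv:2410.10726 — 4 statements merged into one kernel-verified Lean document; each statement's English description precedes it below -/
import Mathlib

section
/- Let n ≥ 3 be an integer. For all integers ℓ, m with 0 ≤ ℓ ≤ 2^(n-2) − 1 and 0 ≤ m ≤ 2^(n-2), the congruence m·(1 + 5^ℓ) ≡ 2^(n-1) (mod 2^n) holds if and only if m = 2^(n-2). -/
/-- Lemma 2.16(b): for `n ≥ 3`, integers `0 ≤ ℓ ≤ 2^(n-2) - 1` and `0 ≤ m ≤ 2^(n-2)`,
`m * (1 + 5^ℓ) ≡ 2^(n-1) (mod 2^n)` if and only if `m = 2^(n-2)`. -/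
theorem stmt_1 (n : ℕ) (hn : 3 ≤ n) (ℓ m : ℕ)
    (hℓ : ℓ ≤ 2 ^ (n - 2) - 1) (hm : m ≤ 2 ^ (n - 2)) :
    ((m : ℤ) * (1 + 5 ^ ℓ) ≡ 2 ^ (n - 1) [ZMOD 2 ^ n]) ↔ m = 2 ^ (n - 2) := by
  obtain ⟨j, rfl⟩ : ∃ j, n = j + 2 := ⟨n - 2, by omega⟩
  obtain ⟨k, hk⟩ : (4 : ℤ) ∣ 5 ^ ℓ - 1 := by simpa using sub_dvd_pow_sub_pow (5 : ℤ) 1 ℓ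
  have h_five : (1 : ℤ) + 5 ^ ℓ = 2 * (2 * k + 1) := by linarith
  rw [show j + 2 - 2 = j by omega] at hm ⊢
  rw [show j + 2 - 1 = j + 1 by omega, h_five, Int.modEq_iff_dvd]
  constructor
  · rintro ⟨c, hc⟩
    have h_mul : (m : ℤ) * (2 * k + 1) = 2 ^ j * (1 - 2 * c) := by
      rw [pow_succ, pow_add] at hc
      linarith
    have h_coprime : IsCoprime ((2 : ℤ) ^ j) (2 * k + 1) :=
      IsCoprime.pow_left ⟨-k, 1, by ring⟩
    have h_dvd : 2 ^ j ∣ m := by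
      exact_mod_cast h_coprime.dvd_of_dvd_mul_right (Dvd.intro _ h_mul.symm)
    rcases Nat.eq_zero_or_pos m with rfl | h_m
    · have h_zero : (2 : ℤ) ^ j * (1 - 2 * c) = 0 := by simpa using h_mul.symm
      rcases mul_eq_zero.mp h_zero with h | h
      · exact absurd h (by positivity)
      · omega
    · exact le_antisymm hm (Nat.le_of_dvd h_m h_dvd)
  · rintro rfl
    exact ⟨-k, by push_cast; ring⟩
end

section
/- Let n ≥ 4 be an integer, let ℓ be an integer with 1 ≤ ℓ ≤ 2^(n-2) − 1, and set v = v₂(ℓ), the 2-adic valuation of ℓ. Then for every integer m with 0 ≤ m ≤ 2^(n-v-3), the congruence of integers m·(1 − 5^ℓ) ≡ 2^(n-1) (mod 2^n) holds if and only if m = 2^(n-v-3). -/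
/-- For `ℓ ≠ 0`, the 2-adic valuation of `1 - 5 ^ ℓ` is `v₂(ℓ) + 2`. -/
theorem exists_odd_one_sub_five_pow_eq {ℓ : ℕ} (hℓ : ℓ ≠ 0) :
    ∃ u : ℤ, Odd u ∧ (1 - 5 ^ ℓ : ℤ) = 2 ^ (padicValNat 2 ℓ + 2) * u := by
  have hfour : emultiplicity (2 : ℤ) (1 - 5) = (2 : ℕ) := by
    rw [emultiplicity_eq_coe]
    norm_num
  have hval : emultiplicity (2 : ℤ) (ℓ : ℤ) = (padicValNat 2 ℓ : ℕ) := by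
    rw [padicValNat_eq_emultiplicity hℓ]
    exact_mod_cast Int.natCast_emultiplicity 2 ℓ
  have h : emultiplicity (2 : ℤ) (1 ^ ℓ - 5 ^ ℓ) = ((padicValNat 2 ℓ + 2 : ℕ) : ℕ∞) := by
    rw [Int.two_pow_sub_pow' ℓ (by norm_num) (by norm_num), hfour, hval, add_comm]
    norm_cast
  rw [one_pow, emultiplicity_eq_coe] at h
  obtain ⟨⟨u, hu⟩, hndvd⟩ := h
  refine ⟨u, ?_, hu⟩
  rw [← Int.not_even_iff_odd, even_iff_two_dvd]
  intro hdvd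
  apply hndvd
  rw [hu, pow_succ (2 : ℤ) (padicValNat 2 ℓ + 2)]
  exact mul_dvd_mul_left _ hdvd

/-- If `u` is odd, then `2 ^ k` is the only `m ≤ 2 ^ k` with `m * u ≡ 2 ^ k` modulo
`2 ^ (k + 1)`. -/
theorem mul_odd_modEq_two_pow_iff {k m : ℕ} {u : ℤ} (hu : Odd u) (hm : m ≤ 2 ^ k) :
    (m : ℤ) * u ≡ 2 ^ k [ZMOD 2 ^ (k + 1)] ↔ m = 2 ^ k := by
  constructor
  · intro h
    have hmu : (2 : ℤ) ^ k ∣ m * u :=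
      (h.of_dvd (pow_dvd_pow 2 k.le_succ)).dvd_iff.mpr dvd_rfl
    have hcop : IsCoprime ((2 : ℤ) ^ k) u := (Int.isCoprime_two_left.mpr hu).pow_left
    have hdvd : 2 ^ k ∣ m := by exact_mod_cast hcop.dvd_of_dvd_mul_right hmu
    refine hm.antisymm (Nat.le_of_dvd (Nat.pos_of_ne_zero ?_) hdvd)
    rintro rfl
    have hle : (2 : ℤ) ^ (k + 1) ∣ 2 ^ k := by simpa using h.dvd
    have := Int.le_of_dvd (by positivity) hle
    have : (0 : ℤ) < 2 ^ k := by positivity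
    omega
  · rintro rfl
    obtain ⟨w, rfl⟩ := hu
    exact Int.modEq_iff_dvd.mpr ⟨-w, by push_cast; ring⟩

/-- Lemma 2.16(c): for `n ≥ 4`, `1 ≤ ℓ ≤ 2^(n-2) - 1` with `v = v₂(ℓ)`, and
`0 ≤ m ≤ 2^(n-v-3)`, the congruence `m * (1 - 5^ℓ) ≡ 2^(n-1) (mod 2^n)` holds
if and only if `m = 2^(n-v-3)`. -/
theorem stmt_2 (n : ℕ) (hn : 4 ≤ n) (ℓ : ℕ) (hℓ1 : 1 ≤ ℓ) (hℓ2 : ℓ ≤ 2 ^ (n - 2) - 1)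
    (v : ℕ) (hv : v = padicValNat 2 ℓ) (m : ℕ) (hm : m ≤ 2 ^ (n - v - 3)) :
    ((m : ℤ) * (1 - 5 ^ ℓ) ≡ 2 ^ (n - 1) [ZMOD 2 ^ n]) ↔ m = 2 ^ (n - v - 3) := by
  obtain ⟨u, hu, hfactor⟩ := exists_odd_one_sub_five_pow_eq (Nat.one_le_iff_ne_zero.mp hℓ1)
  rw [← hv] at hfactor
  have hvn : v < n - 2 := by
    have hle : 2 ^ v ≤ ℓ := Nat.le_of_dvd hℓ1 (hv ▸ pow_padicValNat_dvd)
    have hpos : 0 < 2 ^ (n - 2) := by positivity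
    exact (Nat.pow_lt_pow_iff_right one_lt_two).mp (by omega)
  rw [← mul_odd_modEq_two_pow_iff hu hm, hfactor, mul_left_comm]
  have hpred : (2 : ℤ) ^ (n - 1) = 2 ^ (v + 2) * 2 ^ (n - v - 3) := by
    rw [← pow_add]
    congr 1
    omega
  have hpow : (2 : ℤ) ^ n = 2 ^ (v + 2) * 2 ^ (n - v - 3 + 1) := by
    rw [← pow_add]
    congr 1
    omega
  rw [hpred, hpow, Int.modEq_iff_dvd, Int.modEq_iff_dvd, ← mul_sub,
    mul_dvd_mul_iff_left (by positivity)]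
end

section
/- Let F be a field and D a finite-dimensional central division algebra over F, i.e., a division ring that is an F-algebra, finite-dimensional over F, whose center is exactly (the image of) F. Let L be a commutative F-subalgebra of D that is maximal commutative, in the sense that every element of D that commutes with every element of L belongs to L; assume L is a field and that the extension L/F is Galois, with Galois group G = Aut_F(L). Then there exists a family of units e : G → Dˣ with e(id) = 1 such that: (i) the family (e(φ))_{φ ∈ G} is a basis of D as a left L-vector space (with scalar multiplication given by left multiplication by elements of L inside D); (ii) e(φ) · x = φ(x) · e(φ) for every x ∈ L and every φ ∈ G (identifying elements of L with their images in D); (iii) for all φ₁, φ₂ ∈ G there exists a unit μ(φ₁, φ₂) ∈ Lˣ with e(φ₁) · e(φ₂) = μ(φ₁, φ₂) · e(φ₁ ∘ φ₂), and μ satisfies the 2-cocycle identity φ₁(μ(φ₂, φ₃)) · μ(φ₁, φ₂ ∘ φ₃) = μ(φ₁, φ₂) · μ(φ₁ ∘ φ₂, φ₃) for all φ₁, φ₂, φ₃ ∈ G. -/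
/-- For a finite Galois extension `L / F` inside an `F`-algebra `D`, every element of `D` is a sum of
elements `c φ`, one for each `φ ∈ Gal(L/F)`, such that `c φ` intertwines right multiplication by
`x` with left multiplication by `φ x`. -/
theorem exists_sum_eq_of_isGalois {F D L : Type*} [Field F] [Ring D] [Algebra F D] [Field L]
    [Algebra F L] [FiniteDimensional F L] [IsGalois F L] (ι : L →ₐ[F] D) (d : D) :
    ∃ c : (L ≃ₐ[F] L) → D,
      (∀ φ x, c φ * ι x = ι (φ x) * c φ) ∧ ∑ φ, c φ = d := by
  classical
  let b := Module.finBasis F L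
  have sum_traceDual (x : L) : ∑ i, Algebra.trace F L (x * b i) • b.traceDual i = x := by
    simpa using b.traceDual.sum_repr x
  have sum_basis (x : L) : ∑ i, Algebra.trace F L (x * b.traceDual i) • b i = x := by
    have h := b.traceDual.traceDual.sum_repr x
    simp only [Module.Basis.traceDual_repr_apply b.traceDual, Algebra.traceForm_apply] at h
    rwa [Module.Basis.traceDual_traceDual] at h
  refine ⟨fun φ => ∑ i, ι (φ (b.traceDual i)) * d * ι (b i), fun φ x => ?_, ?_⟩
  · have right (i) : ι (φ (b.traceDual i)) * d * ι (b i) * ι x =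
        ∑ j, Algebra.trace F L (b i * x * b.traceDual j) •
          (ι (φ (b.traceDual i)) * d * ι (b j)) := by
      rw [mul_assoc, ← map_mul]
      conv_lhs => rw [← sum_basis (b i * x)]
      simp only [map_sum, map_smul, Finset.mul_sum, mul_smul_comm]
    have left (j) : ι (φ x) * (ι (φ (b.traceDual j)) * d * ι (b j)) =
        ∑ i, Algebra.trace F L (b i * x * b.traceDual j) •
          (ι (φ (b.traceDual i)) * d * ι (b j)) := by
      rw [← mul_assoc, ← mul_assoc, ← map_mul, ← map_mul]
      conv_lhs => rw [← sum_traceDual (x * b.traceDual j)]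
      simp only [map_sum, map_smul, Finset.sum_mul, smul_mul_assoc]
      exact Finset.sum_congr rfl fun i _ => by congr 2; ring
    simp only [Finset.sum_mul, Finset.mul_sum, right, left]
    exact Finset.sum_comm
  · rw [Finset.sum_comm]
    have sum_automorphisms (i) : ∑ φ : L ≃ₐ[F] L, ι (φ (b.traceDual i)) * d * ι (b i) =
        d * ι (Algebra.trace F L (1 * b.traceDual i) • b i) := by
      rw [← Finset.sum_mul, ← Finset.sum_mul, ← map_sum, ← trace_eq_sum_automorphisms,
        AlgHom.commutes, Algebra.commutes, mul_assoc, one_mul, map_smul, Algebra.smul_def]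
    simp only [sum_automorphisms]
    rw [← Finset.mul_sum, ← map_sum, sum_basis, map_one, mul_one]

/-- The automorphisms of `L / F` which are induced by conjugation by a unit of `D`. -/
def innerAutSubgroup {F D L : Type*} [Field F] [Ring D] [Algebra F D] [Field L] [Algebra F L]
    (ι : L →ₐ[F] D) : Subgroup (L ≃ₐ[F] L) where
  carrier := {φ | ∃ u : Dˣ, ∀ x, (u : D) * ι x = ι (φ x) * u}
  one_mem' := ⟨1, by simp⟩
  mul_mem' := by
    rintro φ ψ ⟨u, hu⟩ ⟨v, hv⟩
    refine ⟨u * v, fun x => ?_⟩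
    rw [Units.val_mul, mul_assoc, hv, ← mul_assoc, hu, mul_assoc, AlgEquiv.mul_apply]
  inv_mem' := by
    rintro φ ⟨u, hu⟩
    refine ⟨u⁻¹, fun x => ?_⟩
    rw [Units.inv_mul_eq_iff_eq_mul, ← mul_assoc, hu, mul_assoc, Units.mul_inv, mul_one]
    exact congrArg ι (φ.apply_symm_apply x).symm

/-- Every automorphism of a finite Galois subextension of a central division algebra is
inner. -/
theorem innerAutSubgroup_eq_top {F D L : Type*} [Field F] [DivisionRing D] [Algebra F D] [Field L]
    [Algebra F L] [FiniteDimensional F L] [IsGalois F L]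
    (hcenter : Subalgebra.center F D = ⊥) (ι : L →ₐ[F] D) : innerAutSubgroup ι = ⊤ := by
  rw [← IntermediateField.fixingSubgroup_fixedField (innerAutSubgroup ι)]
  have fixed : IntermediateField.fixedField (innerAutSubgroup ι) = ⊥ := by
    refine eq_bot_iff.mpr fun x hx => ?_
    rw [IntermediateField.mem_fixedField_iff] at hx
    have central : ι x ∈ Subalgebra.center F D := by
      refine Subalgebra.mem_center_iff.mpr fun d => ?_
      obtain ⟨c, hc, rfl⟩ := exists_sum_eq_of_isGalois ι d
      rw [Finset.sum_mul, Finset.mul_sum]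
      refine Finset.sum_congr rfl fun φ _ => ?_
      by_cases h : c φ = 0
      · simp [h]
      · rw [hc, hx φ ⟨Units.mk0 _ h, hc φ⟩]
    rw [hcenter, Algebra.mem_bot] at central
    obtain ⟨a, ha⟩ := central
    exact IntermediateField.mem_bot.mpr ⟨a, ι.injective ((ι.commutes a).trans ha)⟩
  rw [fixed, IntermediateField.fixingSubgroup_bot]

/-- Units inducing the distinct automorphisms of `L / F` by conjugation are left linearly
independent over `L`. -/
theorem linearIndependent_of_mul_eq {F D L : Type*} [Field F] [DivisionRing D] [Algebra F D]
    [Field L] [Algebra F L] [FiniteDimensional F L] [Algebra.IsSeparable F L] (ι : L →ₐ[F] D)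
    (e : (L ≃ₐ[F] L) → Dˣ) (he : ∀ φ x, (e φ : D) * ι x = ι (φ x) * e φ) :
    letI : Module L D := Module.compHom D ι.toRingHom
    LinearIndependent L (fun φ => (e φ : D)) := by
  let : Module L D := Module.compHom D ι.toRingHom
  let pb := Field.powerBasisOfFiniteOfSeparable F L
  let f : Module.End L D :=
    { toFun := fun d => d * ι pb.gen
      map_add' := fun _ _ => add_mul _ _ _
      map_smul' := fun _ _ => mul_assoc _ _ _ }
  refine Module.End.eigenvectors_linearIndependent' f (fun φ : L ≃ₐ[F] L => φ pb.gen) ?_ _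
    fun φ => ⟨Module.End.mem_eigenspace_iff.mpr (he φ pb.gen), (e φ).ne_zero⟩
  intro φ ψ h
  have := pb.algHom_ext (f := φ.toAlgHom) (g := ψ.toAlgHom) h
  exact AlgEquiv.ext fun x => DFunLike.congr_fun this x

/-- Crossed-product description of a finite-dimensional central division algebra `D` over a
field `F` with a Galois maximal commutative subfield `L` (given by an embedding
`ι : L →ₐ[F] D` whose image is maximal commutative): there exist units `e φ ∈ Dˣ`, one for
each `φ ∈ Gal(L/F)`, with `e id = 1`, forming a left `L`-basis of `D` (for the module
structure `x • d = ι x * d`), satisfying `e φ * ι x = ι (φ x) * e φ`, and multiplying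
according to a `2`-cocycle `μ` with values in `Lˣ`. -/
theorem stmt_4 (F : Type*) [Field F] (D : Type*) [DivisionRing D] [Algebra F D]
    [FiniteDimensional F D]
    (hcenter : Subalgebra.center F D = ⊥)
    (L : Type*) [Field L] [Algebra F L] [IsGalois F L]
    (ι : L →ₐ[F] D)
    (hmax : ∀ d : D, (∀ x : L, d * ι x = ι x * d) → d ∈ ι.range) :
    letI : Module L D := Module.compHom D ι.toRingHom
    ∃ e : (L ≃ₐ[F] L) → Dˣ,
      e 1 = 1 ∧
      LinearIndependent L (fun φ : L ≃ₐ[F] L => (e φ : D)) ∧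
      Submodule.span L (Set.range fun φ : L ≃ₐ[F] L => (e φ : D)) = ⊤ ∧
      (∀ (φ : L ≃ₐ[F] L) (x : L), (e φ : D) * ι x = ι (φ x) * (e φ : D)) ∧
      ∃ μ : (L ≃ₐ[F] L) → (L ≃ₐ[F] L) → Lˣ,
        (∀ φ₁ φ₂ : L ≃ₐ[F] L, (e φ₁ : D) * (e φ₂ : D) = ι (μ φ₁ φ₂) * (e (φ₁ * φ₂) : D)) ∧
        ∀ φ₁ φ₂ φ₃ : L ≃ₐ[F] L,
          φ₁ ((μ φ₂ φ₃ : L)) * (μ φ₁ (φ₂ * φ₃) : L) = (μ φ₁ φ₂ : L) * (μ (φ₁ * φ₂) φ₃ : L) := by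
  let : Module L D := Module.compHom D ι.toRingHom
  have : FiniteDimensional F L := FiniteDimensional.of_injective ι.toLinearMap ι.injective
  have exists_unit (φ : L ≃ₐ[F] L) :
      ∃ u : Dˣ, (φ = 1 → u = 1) ∧ ∀ x, (u : D) * ι x = ι (φ x) * u := by
    by_cases h : φ = 1
    · exact ⟨1, fun _ => rfl, by simp [h]⟩
    · have hφ : φ ∈ innerAutSubgroup ι := innerAutSubgroup_eq_top hcenter ι ▸ Subgroup.mem_top φ
      obtain ⟨u, hu⟩ := hφ
      exact ⟨u, fun h' => absurd h' h, hu⟩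
  choose e he_one he using exists_unit
  have exists_coeff (φ : L ≃ₐ[F] L) (d : D) (hd : ∀ x, d * ι x = ι (φ x) * d) :
      ∃ a : L, d = ι a * e φ := by
    obtain ⟨a, ha⟩ := hmax (d * ↑(e φ)⁻¹) fun x => by
      have hx := he φ (φ.symm x)
      rw [φ.apply_symm_apply] at hx
      have hinv : (↑(e φ)⁻¹ : D) * ι x = ι (φ.symm x) * ↑(e φ)⁻¹ := by
        rw [Units.inv_mul_eq_iff_eq_mul, ← mul_assoc, hx, mul_assoc, Units.mul_inv, mul_one]
      rw [mul_assoc, hinv, ← mul_assoc, hd, φ.apply_symm_apply, mul_assoc]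
    exact ⟨a, (Units.mul_inv_eq_iff_eq_mul _).mp ha.symm⟩
  have exists_cocycle (φ ψ : L ≃ₐ[F] L) : ∃ a : Lˣ, (e φ : D) * e ψ = ι a * e (φ * ψ) := by
    obtain ⟨a, ha⟩ := exists_coeff (φ * ψ) (e φ * e ψ) fun x => by
      rw [mul_assoc, he, ← mul_assoc, he, mul_assoc, AlgEquiv.mul_apply]
    refine ⟨Units.mk0 a ?_, ha⟩
    rintro rfl
    rw [map_zero, zero_mul] at ha
    exact (e φ * e ψ).ne_zero ha
  choose μ hμ using exists_cocycle
  refine ⟨e, he_one 1 rfl, linearIndependent_of_mul_eq ι e he, ?_, he, μ, hμ, fun φ₁ φ₂ φ₃ => ?_⟩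
  · refine eq_top_iff.mpr fun d _ => ?_
    obtain ⟨c, hc, rfl⟩ := exists_sum_eq_of_isGalois ι d
    refine Submodule.sum_mem _ fun φ _ => ?_
    obtain ⟨a, ha⟩ := exists_coeff φ (c φ) (hc φ)
    rw [ha]
    exact Submodule.smul_mem _ a (Submodule.subset_span ⟨φ, rfl⟩)
  · apply ι.injective
    apply (e (φ₁ * φ₂ * φ₃)).isUnit.mul_right_cancel
    calc ι (φ₁ (μ φ₂ φ₃) * μ φ₁ (φ₂ * φ₃)) * e (φ₁ * φ₂ * φ₃)
        = ι (φ₁ (μ φ₂ φ₃)) * (e φ₁ * e (φ₂ * φ₃)) := by rw [hμ, map_mul, mul_assoc, mul_assoc φ₁]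
      _ = e φ₁ * (e φ₂ * e φ₃) := by rw [hμ φ₂, ← mul_assoc, ← he, mul_assoc]
      _ = ι (μ φ₁ φ₂ * μ (φ₁ * φ₂) φ₃) * e (φ₁ * φ₂ * φ₃) := by
        rw [← mul_assoc, hμ φ₁ φ₂, mul_assoc, hμ, map_mul, ← mul_assoc]
end

section
/- For every integer n ≥ 2 there is an isomorphism of real representations of the cyclic group C_{2^n}: (⊕_{ℓ=0}^{2^(n-2)−1} M_{1−5^ℓ}) ⊕ (⊕_{ℓ=0}^{2^(n-2)−1} M_{1+5^ℓ}) ⊕ (M_1)^{⊕ 2^(n-1)} ≅ (ℝ[C_{2^n}])^{⊕ 2^(n-1)}, where ℝ[C_{2^n}] denotes the real regular representation of C_{2^n} (the group algebra with C_{2^n} acting by left multiplication). Both sides have real dimension 2^(2n−1). -/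
open Polynomial

/-- `An n = ℝ[x]/(x^(2^(n-1)) + 1)`. -/
noncomputable abbrev An (n : ℕ) : Type :=
  ℝ[X] ⧸ Ideal.span {(X : ℝ[X]) ^ 2 ^ (n - 1) + 1}

/-- The image of `x` in `An n`, as a unit (its inverse is `-x^(2^(n-1)-1)`);
it has multiplicative order `2^n`.  For `c : ℤ`, the representation `M c` of the
cyclic group `C_{2^n} = ⟨γ⟩` is `An n` with `γ` acting by multiplication by `(xu n)^c`. -/
noncomputable def xu (n : ℕ) : (An n)ˣ :=
  Units.mkOfMulEqOne (Ideal.Quotient.mk _ X)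
    (-(Ideal.Quotient.mk (Ideal.span {(X : ℝ[X]) ^ 2 ^ (n - 1) + 1}) X) ^ (2 ^ (n - 1) - 1))
    (by
      have h0 : (Ideal.Quotient.mk (Ideal.span {(X : ℝ[X]) ^ 2 ^ (n - 1) + 1})
          ((X : ℝ[X]) ^ 2 ^ (n - 1) + 1)) = 0 :=
        Ideal.Quotient.eq_zero_iff_mem.mpr (Ideal.subset_span (Set.mem_singleton _))
      have hx : (Ideal.Quotient.mk (Ideal.span {(X : ℝ[X]) ^ 2 ^ (n - 1) + 1}) X) ^ 2 ^ (n - 1)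
          = -1 := by
        rw [map_add, map_pow, map_one] at h0
        linear_combination h0
      have h1 : 1 ≤ 2 ^ (n - 1) := Nat.one_le_two_pow
      calc Ideal.Quotient.mk _ X *
            (-(Ideal.Quotient.mk (Ideal.span {(X : ℝ[X]) ^ 2 ^ (n - 1) + 1}) X) ^ (2 ^ (n - 1) - 1))
          = -((Ideal.Quotient.mk (Ideal.span {(X : ℝ[X]) ^ 2 ^ (n - 1) + 1}) X) ^ (2 ^ (n - 1) - 1 + 1)) := by
            ring
        _ = 1 := by rw [Nat.sub_add_cancel h1, hx]; ring)

/-- The finite Fourier transform on `ZMod q → A` attached to an additive character `ψ` whose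
twisted sums vanish. It turns multiplication by `ψ` into translation by `1`. -/
theorem exists_fourier_linearEquiv {K A : Type*} [Field K] [CharZero K] [CommRing A] [Algebra K A]
    [FiniteDimensional K A] {q : ℕ} [NeZero q] (ψ : AddChar (ZMod q) A)
    (hψ : ∀ k : ZMod q, k ≠ 0 → ∑ d, ψ (k * d) = 0) :
    ∃ E : (ZMod q → A) ≃ₗ[K] (ZMod q → A),
      ∀ v k, E (fun d => ψ d * v d) k = E v (k - 1) := by
  let F : (ZMod q → A) →ₗ[K] (ZMod q → A) :=
    { toFun := fun v k => ∑ d, ψ (-(d * k)) * v d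
      map_add' := fun v w => by
        ext k
        simp [mul_add, Finset.sum_add_distrib]
      map_smul' := fun c v => by
        ext k
        simp [Finset.smul_sum] }
  have hF : ∀ v k, F v k = ∑ d, ψ (-(d * k)) * v d := fun _ _ => rfl
  have inversion : ∀ v e, ∑ k, ψ (e * k) * F v k = (q : K) • v e := by
    intro v e
    simp_rw [hF, Finset.mul_sum, ← mul_assoc, ← AddChar.map_add_eq_mul]
    rw [Finset.sum_comm]
    simp_rw [← Finset.sum_mul, ← sub_eq_add_neg, ← sub_mul]
    rw [Finset.sum_eq_single e]
    · simp [Algebra.smul_def]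
    · intro d _ hd
      rw [hψ _ (sub_ne_zero.mpr hd.symm), zero_mul]
    · simp
  have hinj : Function.Injective F := by
    rw [injective_iff_map_eq_zero]
    intro v hv
    ext e
    have h := inversion v e
    simp only [hv, Pi.zero_apply, mul_zero, Finset.sum_const_zero] at h
    exact (smul_eq_zero.mp h.symm).resolve_left (Nat.cast_ne_zero.mpr (NeZero.ne q))
  refine ⟨LinearEquiv.ofInjectiveEndo F hinj, fun v k => ?_⟩
  simp only [LinearEquiv.coe_ofInjectiveEndo, hF, ← mul_assoc, ← AddChar.map_add_eq_mul]
  refine Finset.sum_congr rfl fun d _ => ?_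
  congr 2
  ring

/-- Splitting the coefficient ring `A` along a basis identifies functions `G → A` with copies of
the group algebra of `G`, compatibly with left translations. -/
theorem exists_pi_linearEquiv_monoidAlgebra {K A G ι : Type*} [Field K] [AddCommGroup A]
    [Module K A] [AddCommGroup G] [Finite G] [Finite ι] (b : Module.Basis ι K A) :
    ∃ E : (G → A) ≃ₗ[K] (ι → MonoidAlgebra K (Multiplicative G)),
      ∀ (g : G) (v : G → A), E (fun k => v (k - g)) =
        fun i => MonoidAlgebra.single (Multiplicative.ofAdd g) (1 : K) * E v i := by
  let swap : (G → ι → K) ≃ₗ[K] (ι → G → K) :=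
    { Equiv.piComm fun _ _ => K with
      map_add' := fun _ _ => rfl
      map_smul' := fun _ _ => rfl }
  let toAlg : (G → K) ≃ₗ[K] MonoidAlgebra K (Multiplicative G) :=
    (LinearEquiv.funCongrLeft K K Multiplicative.toAdd).trans
      ((Finsupp.linearEquivFunOnFinite K K (Multiplicative G)).symm.trans
        (MonoidAlgebra.coeffLinearEquiv K).symm)
  have htoAlg : ∀ f m, (toAlg f).coeff m = f m.toAdd := fun _ _ => rfl
  refine ⟨(LinearEquiv.piCongrRight fun _ => b.equivFun).trans
    (swap.trans (LinearEquiv.piCongrRight fun _ => toAlg)), fun g v => ?_⟩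
  ext i m
  rw [MonoidAlgebra.coeff_single_mul_apply, one_mul]
  change (toAlg _).coeff m = (toAlg _).coeff _
  rw [htoAlg, htoAlg]
  change b.equivFun (v _) i = b.equivFun (v _) i
  simp [sub_eq_neg_add]

theorem xu_pow_half (n : ℕ) : (xu n : An n) ^ 2 ^ (n - 1) = -1 := by
  have h : Ideal.Quotient.mk (Ideal.span {(X : ℝ[X]) ^ 2 ^ (n - 1) + 1})
      ((X : ℝ[X]) ^ 2 ^ (n - 1) + 1) = 0 :=
    Ideal.Quotient.eq_zero_iff_mem.mpr (Ideal.subset_span (Set.mem_singleton _))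
  rw [map_add, map_pow, map_one] at h
  exact eq_neg_of_add_eq_zero_left h

theorem xu_pow_two_pow {n : ℕ} (hn : 1 ≤ n) : xu n ^ 2 ^ n = 1 := by
  ext
  have h : 2 ^ n = 2 ^ (n - 1) * 2 := by rw [← pow_succ, Nat.sub_add_cancel hn]
  rw [Units.val_pow_eq_pow_val, h, pow_mul, xu_pow_half, Units.val_one]
  exact neg_one_sq (R := An n)

/-- The additive character of `ZMod (2 ^ n)` sending `1` to `x`. -/
noncomputable def xuChar {n : ℕ} (hn : 1 ≤ n) : AddChar (ZMod (2 ^ n)) (An n) :=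
  (Units.coeHom (An n)).compAddChar (AddChar.zmodChar (C := (An n)ˣ) (2 ^ n) (xu_pow_two_pow hn))

theorem xuChar_natCast {n : ℕ} (hn : 1 ≤ n) (m : ℕ) :
    xuChar hn (m : ZMod (2 ^ n)) = (xu n : An n) ^ m := by
  simp [xuChar, AddChar.zmodChar_apply']

theorem xuChar_intCast {n : ℕ} (hn : 1 ≤ n) (c : ℤ) :
    xuChar hn (c : ZMod (2 ^ n)) = ((xu n ^ c : (An n)ˣ) : An n) := by
  have h : AddChar.zmodChar (2 ^ n) (xu_pow_two_pow hn) 1 = xu n := by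
    simpa using AddChar.zmodChar_apply' (xu_pow_two_pow hn) 1
  rw [← zsmul_one, xuChar, MonoidHom.compAddChar_apply, Function.comp_apply,
    AddChar.map_zsmul_eq_zpow, h, Units.coeHom_apply]

/-- Every nonzero element of `ZMod (2 ^ n)` has a multiple equal to `2 ^ (n - 1)`. -/
theorem exists_mul_eq_two_pow_pred {n : ℕ} {k : ZMod (2 ^ n)} (hk : k ≠ 0) :
    ∃ m : ZMod (2 ^ n), k * m = ((2 ^ (n - 1) : ℕ) : ZMod (2 ^ n)) := by
  have hval : k.val ≠ 0 := (ZMod.val_ne_zero k).mpr hk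
  obtain ⟨a, t, ht, hat⟩ := Nat.exists_eq_two_pow_mul_odd hval
  have ha : a < n := by
    have h1 : 2 ^ a ≤ k.val := Nat.le_of_dvd (Nat.pos_of_ne_zero hval) ⟨t, hat⟩
    exact (Nat.pow_lt_pow_iff_right (by norm_num)).mp (h1.trans_lt (ZMod.val_lt k))
  obtain ⟨s, rfl⟩ := ht
  obtain ⟨j, rfl⟩ : ∃ j, n = a + j + 1 := ⟨n - a - 1, by omega⟩
  have hzero : ((2 ^ (a + j + 1) : ℕ) : ZMod (2 ^ (a + j + 1))) = 0 := ZMod.natCast_self _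
  refine ⟨((2 ^ j : ℕ) : ZMod _), ?_⟩
  rw [← ZMod.natCast_zmod_val k, hat, Nat.add_sub_cancel]
  push_cast at hzero ⊢
  linear_combination (s : ZMod (2 ^ (a + j + 1))) * hzero

theorem sum_xuChar_mul_eq_zero {n : ℕ} (hn : 1 ≤ n) {k : ZMod (2 ^ n)} (hk : k ≠ 0) :
    ∑ d, xuChar hn (k * d) = 0 := by
  obtain ⟨m, hm⟩ := exists_mul_eq_two_pow_pred hk
  have h : ∑ d, xuChar hn (k * d) = -∑ d, xuChar hn (k * d) := by
    rw [← Finset.sum_neg_distrib]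
    refine (Fintype.sum_equiv (Equiv.addRight m) _ _ fun d => ?_).symm
    rw [Equiv.coe_addRight, mul_add, hm, AddChar.map_add_eq_mul, xuChar_natCast, xu_pow_half]
    ring
  have : IsAddTorsionFree (An n) := .of_isTorsionFree ℝ _
  exact self_eq_neg.mp h

theorem An_algHom_ext {n : ℕ} {B : Type*} [Semiring B] [Algebra ℝ B] {f g : An n →ₐ[ℝ] B}
    (h : f (xu n) = g (xu n)) : f = g :=
  Ideal.Quotient.algHom_ext _ (Polynomial.algHom_ext h)

theorem exists_algHom_xu_pow (n : ℕ) {d : ℕ} (hd : Odd d) :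
    ∃ f : An n →ₐ[ℝ] An n, f (xu n) = (xu n : An n) ^ d := by
  refine ⟨Ideal.Quotient.liftₐ _ (aeval ((xu n : An n) ^ d)) fun p hp => ?_, ?_⟩
  · obtain ⟨r, rfl⟩ := Ideal.mem_span_singleton.mp hp
    have h : ((xu n : An n) ^ d) ^ 2 ^ (n - 1) = -1 := by
      rw [pow_right_comm, xu_pow_half]
      exact hd.neg_one_pow (α := An n)
    rw [map_mul, map_add, map_pow, aeval_X, map_one, h, neg_add_cancel, zero_mul]
  · change aeval _ X = _
    rw [aeval_X]

theorem exists_algEquiv_xu_pow {n : ℕ} (hn : 1 ≤ n) {d : ℕ} (hd : Odd d) :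
    ∃ f : An n ≃ₐ[ℝ] An n, f (xu n) = (xu n : An n) ^ d := by
  have htwo : 2 ∣ 2 ^ n := dvd_pow_self 2 (by omega)
  obtain ⟨e, he⟩ := Nat.exists_mul_mod_eq_one_of_coprime
    (hd.coprime_two_right.pow_right n) (Nat.one_lt_two_pow (by omega))
  have hxu : (xu n : An n) ^ (d * e) = xu n := by
    rw [← Units.val_pow_eq_pow_val, pow_eq_pow_mod _ (xu_pow_two_pow hn), he.2, pow_one]
  have hodd : Odd e := by
    have h1 : d * e % 2 = 1 := by
      rw [← Nat.mod_mod_of_dvd _ htwo, he.2]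
    exact (Nat.odd_mul.mp (Nat.odd_iff.mpr h1)).2
  obtain ⟨f, hf⟩ := exists_algHom_xu_pow n hd
  obtain ⟨g, hg⟩ := exists_algHom_xu_pow n hodd
  refine ⟨AlgEquiv.ofAlgHom f g (An_algHom_ext ?_) (An_algHom_ext ?_), hf⟩
  · simp [hf, hg, ← pow_mul, hxu]
  · simp [hf, hg, ← pow_mul, mul_comm e d, hxu]

theorem An_monic (n : ℕ) : ((X : ℝ[X]) ^ 2 ^ (n - 1) + 1).Monic := by
  simpa using monic_X_pow_add_C (1 : ℝ) (n := 2 ^ (n - 1)) (by positivity)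

instance An_finiteDimensional (n : ℕ) : FiniteDimensional ℝ (An n) :=
  (An_monic n).finite_quotient

theorem finrank_An (n : ℕ) : Module.finrank ℝ (An n) = 2 ^ (n - 1) := by
  rw [finrank_quotient_span_eq_natDegree]
  simpa using natDegree_X_pow_add_C (n := 2 ^ (n - 1)) (r := (1 : ℝ))

/-- The residues `1 - 5 ^ ℓ`, `1 + 5 ^ ℓ` and `2 i + 1` modulo `2 ^ n`. -/
def residue (n : ℕ) : Fin (2 ^ (n - 2)) ⊕ Fin (2 ^ (n - 2)) ⊕ Fin (2 ^ (n - 1)) → ℤ :=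
  Sum.elim (fun ℓ => 1 - 5 ^ (ℓ : ℕ))
    (Sum.elim (fun ℓ => 1 + 5 ^ (ℓ : ℕ)) fun i => 2 * (i : ℕ) + 1)

theorem five_pow_injective (m : ℕ) {a b : Fin (2 ^ m)}
    (h : (5 : ZMod (2 ^ (m + 2))) ^ (a : ℕ) = 5 ^ (b : ℕ)) : a = b := by
  refine Fin.ext (pow_injOn_Iio_orderOf ?_ ?_ h) <;> simp [ZMod.orderOf_five]

theorem residue_bijective {n : ℕ} (hn : 2 ≤ n) :
    Function.Bijective fun s => (residue n s : ZMod (2 ^ n)) := by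
  obtain ⟨m, rfl⟩ := Nat.exists_eq_add_of_le' hn
  rw [Fintype.bijective_iff_injective_and_card]
  constructor
  · intro s t hst
    have hdvd : (2 ^ (m + 2) : ℤ) ∣ residue (m + 2) t - residue (m + 2) s := by
      simpa using (ZMod.intCast_eq_intCast_iff_dvd_sub _ _ _).mp hst
    have hfour : (4 : ℤ) ∣ residue (m + 2) t - residue (m + 2) s :=
      dvd_trans ⟨2 ^ m, by ring⟩ hdvd
    have hmod : ∀ ℓ : ℕ, (4 : ℤ) ∣ 5 ^ ℓ - 1 := fun ℓ => by
      simpa using sub_dvd_pow_sub_pow (5 : ℤ) 1 ℓ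
    rcases s with a | a | a <;> rcases t with b | b | b <;>
      simp only [residue, Sum.elim_inl, Sum.elim_inr] at hst hfour hdvd
    · push_cast at hst
      rw [five_pow_injective m (sub_right_injective hst)]
    · have := hmod a; have := hmod b; omega
    · have := hmod a; omega
    · have := hmod a; have := hmod b; omega
    · push_cast at hst
      rw [five_pow_injective m (add_right_injective _ hst)]
    · have := hmod a; omega
    · have := hmod b; omega
    · have := hmod b; omega
    · have ha : (a : ℕ) < 2 ^ (m + 1) := a.isLt
      have hb : (b : ℕ) < 2 ^ (m + 1) := b.isLt
      have hab : (b : ℤ) - a = 0 := by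
        refine Int.eq_zero_of_abs_lt_dvd (m := 2 ^ (m + 1)) ?_ ?_
        · obtain ⟨c, hc⟩ := hdvd
          exact ⟨c, by rw [pow_succ] at hc; linarith⟩
        · zify at ha hb
          rw [abs_lt]
          constructor <;> omega
      congr 2
      exact Fin.ext (by omega)
  · simp [ZMod.card]
    ring

/-- The residue representations add up to all twists of `An n`, one for each element of
`ZMod (2 ^ n)`; the odd twists are all isomorphic to the standard one. -/
theorem exists_linearEquiv_pi_zmod {n : ℕ} (hn : 2 ≤ n) :
    ∃ E : ((Fin (2 ^ (n - 2)) → An n) × (Fin (2 ^ (n - 2)) → An n) × (Fin (2 ^ (n - 1)) → An n))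
        ≃ₗ[ℝ] (ZMod (2 ^ n) → An n),
      ∀ v, E ⟨fun ℓ => ((xu n ^ ((1 : ℤ) - 5 ^ (ℓ : ℕ)) : (An n)ˣ) : An n) * v.1 ℓ,
           fun ℓ => ((xu n ^ ((1 : ℤ) + 5 ^ (ℓ : ℕ)) : (An n)ˣ) : An n) * v.2.1 ℓ,
           fun i => ((xu n : An n)) * v.2.2 i⟩
          = fun d => xuChar (one_le_two.trans hn) d * E v d := by
  choose σ hσ using fun i : Fin (2 ^ (n - 1)) =>
    exists_algEquiv_xu_pow (one_le_two.trans hn) (odd_two_mul_add_one (i : ℕ))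
  let e := Equiv.ofBijective _ (residue_bijective hn)
  let R := (LinearEquiv.prodCongr (LinearEquiv.refl ℝ (Fin (2 ^ (n - 2)) → An n))
    ((LinearEquiv.prodCongr (LinearEquiv.refl ℝ (Fin (2 ^ (n - 2)) → An n))
      (LinearEquiv.piCongrRight fun i => (σ i).toLinearEquiv)).trans
        (LinearEquiv.sumArrowLequivProdArrow _ _ ℝ (An n)).symm)).trans
      (LinearEquiv.sumArrowLequivProdArrow _ _ ℝ (An n)).symm
  refine ⟨R.trans (LinearEquiv.funCongrLeft ℝ (An n) e.symm), fun v => ?_⟩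
  ext d
  obtain ⟨s, rfl⟩ := e.surjective d
  have he : e s = (residue n s : ZMod (2 ^ n)) := rfl
  simp only [LinearEquiv.trans_apply, LinearEquiv.funCongrLeft_apply, LinearMap.funLeft_apply,
    Equiv.symm_apply_apply]
  rw [he, xuChar_intCast]
  rcases s with ℓ | ℓ | i
  · rfl
  · rfl
  · change σ i (xu n * v.2.2 i) = ((xu n ^ (2 * (i : ℤ) + 1) : (An n)ˣ) : An n) * σ i (v.2.2 i)
    rw [map_mul, hσ, ← Units.val_pow_eq_pow_val, ← zpow_natCast]
    push_cast
    rfl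

/-- For `n ≥ 2` there is an isomorphism of real representations of `C_{2^n}`
`(⊕_{ℓ=0}^{2^(n-2)-1} M_{1-5^ℓ}) ⊕ (⊕_{ℓ=0}^{2^(n-2)-1} M_{1+5^ℓ}) ⊕ (M_1)^{⊕2^(n-1)}
  ≅ ℝ[C_{2^n}]^{⊕2^(n-1)}`,
i.e. an `ℝ`-linear equivalence intertwining the action of the fixed generator `γ`
(on the left acting on each summand by multiplication by the indicated power of `x`,
on the right by left multiplication in the group algebra). -/
theorem stmt_7 (n : ℕ) (hn : 2 ≤ n) :
    ∃ T : ((Fin (2 ^ (n - 2)) → An n) × (Fin (2 ^ (n - 2)) → An n) × (Fin (2 ^ (n - 1)) → An n))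
        ≃ₗ[ℝ] (Fin (2 ^ (n - 1)) → MonoidAlgebra ℝ (Multiplicative (ZMod (2 ^ n)))),
      ∀ v : (Fin (2 ^ (n - 2)) → An n) × (Fin (2 ^ (n - 2)) → An n) × (Fin (2 ^ (n - 1)) → An n),
        T ⟨fun ℓ => ((xu n ^ ((1 : ℤ) - 5 ^ (ℓ : ℕ)) : (An n)ˣ) : An n) * v.1 ℓ,
           fun ℓ => ((xu n ^ ((1 : ℤ) + 5 ^ (ℓ : ℕ)) : (An n)ˣ) : An n) * v.2.1 ℓ,
           fun i => ((xu n : An n)) * v.2.2 i⟩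
          = fun i =>
              MonoidAlgebra.single (Multiplicative.ofAdd (1 : ZMod (2 ^ n))) (1 : ℝ) * T v i := by
  have h1 : 1 ≤ n := one_le_two.trans hn
  obtain ⟨E, hE⟩ := exists_linearEquiv_pi_zmod hn
  obtain ⟨F, hF⟩ := exists_fourier_linearEquiv (K := ℝ) (xuChar h1)
    fun _ => sum_xuChar_mul_eq_zero h1
  obtain ⟨G, hG⟩ := exists_pi_linearEquiv_monoidAlgebra (G := ZMod (2 ^ n))
    (Module.finBasisOfFinrankEq ℝ (An n) (finrank_An n))
  refine ⟨E.trans (F.trans G), fun v => ?_⟩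
  simp only [LinearEquiv.trans_apply]
  rw [hE, funext (hF (E v)), hG]
end
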